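/- (Weak Young inequality) Let d ≥ 1 and let 1 < p, q, r < ∞ satisfy 1 + 1/q = 1/r + 1/p. There exists a constant C = C(p,q,r,d) > 0 such that: for all measurable f, g : ℝ^d → ℝ with ‖f‖_{L^{r,∞}(ℝ^d)} < ∞ and ‖g‖_{L^p(ℝ^d)} < ∞, the convolution integral (f⋆g)(x) = ∫_{ℝ^d} f(x−y) g(y) dy converges absolutely for almost every x, and ‖f⋆g‖_{L^q(ℝ^d)} ≤ C ‖f‖_{L^{r,∞}(ℝ^d)} ‖g‖_{L^p(ℝ^d)}. -/

import Mathlib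

open MeasureTheory Real ENNReal

noncomputable section

/-- The weak Lebesgue (Lorentz) quasinorm
‖f‖_{L^{r,∞}} = sup_{λ>0} λ · μ{x : |f x| > λ}^{1/r} on ℝ^d. -/
def weakLnorm {d : ℕ} (f : (Fin d → ℝ) → ℝ) (r : ℝ) : ℝ≥0∞ :=
  ⨆ (l : ℝ) (_ : 0 < l),
    ENNReal.ofReal l * (volume {x : Fin d → ℝ | l < |f x|}) ^ (1 / r)

/-- The L^s norm ‖g‖_{L^s} = (∫ |g|^s)^{1/s} on ℝ^d, valued in [0,∞]. -/
def Lnorm {d : ℕ} (g : (Fin d → ℝ) → ℝ) (s : ℝ) : ℝ≥0∞ :=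
  (∫⁻ x : Fin d → ℝ, ENNReal.ofReal (|g x| ^ s)) ^ (1 / s)


lemma wy_J1 (a : ℝ) (ha : -1 < a) (R : ℝ) (hR : 0 ≤ R) :
    ∫⁻ l in Set.Ioo 0 R, ENNReal.ofReal (l ^ a) = ENNReal.ofReal (R ^ (a+1) / (a+1)) := by
  have hi : IntegrableOn (fun l : ℝ => l ^ a) (Set.Ioc 0 R) := by
    rw [← intervalIntegrable_iff_integrableOn_Ioc_of_le hR]
    exact intervalIntegral.intervalIntegrable_rpow' ha
  rw [setLIntegral_congr Ioo_ae_eq_Ioc, ← ofReal_integral_eq_lintegral_ofReal hi]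
  · congr 1
    rw [← intervalIntegral.integral_of_le hR, integral_rpow (Or.inl ha),
      Real.zero_rpow (by linarith), sub_zero]
  · filter_upwards [ae_restrict_mem measurableSet_Ioc] with l hl
    exact Real.rpow_nonneg hl.1.le _

lemma wy_J2 (a : ℝ) (ha : a < -1) (c : ℝ) (hc : 0 < c) :
    ∫⁻ l in Set.Ioi c, ENNReal.ofReal (l ^ a) = ENNReal.ofReal (-c ^ (a+1) / (a+1)) := by
  rw [← ofReal_integral_eq_lintegral_ofReal (integrableOn_Ioi_rpow_of_lt ha hc)]
  · congr 1
    rw [integral_Ioi_rpow_of_lt ha hc]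
  · filter_upwards [ae_restrict_mem measurableSet_Ioi] with l hl
    exact Real.rpow_nonneg (hc.trans hl).le _

/-- Upper truncation. -/
def wyT (τ t : ℝ) : ℝ := if τ < t then t else 0

lemma wyT_meas : Measurable (fun z : ℝ × ℝ => wyT z.1 z.2) := by
  unfold wyT
  exact Measurable.ite (measurableSet_lt measurable_fst measurable_snd) measurable_snd
    measurable_const

section tails
variable {E : Type*} [MeasurableSpace E]

/-- Truncation from above : tail. -/
lemma wy_M1 (μ : Measure E) [SFinite μ] (r : ℝ) (hr : 1 < r) (f : E → ℝ) (hf : Measurable f)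
    (hF : ∀ l : ℝ, 0 < l → μ {x | l < f x} ≤ ENNReal.ofReal (l ^ (-r))) (τ : ℝ) (hτ : 0 < τ) :
    ∫⁻ x, ENNReal.ofReal (wyT τ (f x)) ∂μ ≤
      ENNReal.ofReal (2 ^ r / (r-1) * τ ^ (1 - r)) := by
  have hms : MeasurableSet {z : E × ℝ | z.2 < f z.1} :=
    measurableSet_lt measurable_snd (hf.comp measurable_fst)
  calc ∫⁻ x, ENNReal.ofReal (wyT τ (f x)) ∂μ
      ≤ ∫⁻ x, (2 * ∫⁻ l in Set.Ioi (τ/2), {z : E × ℝ | z.2 < f z.1}.indicator 1 (x, l)) ∂μ := by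
        apply lintegral_mono
        intro x
        have h1 : ∀ l, {z : E × ℝ | z.2 < f z.1}.indicator (1 : E × ℝ → ℝ≥0∞) (x, l)
            = (Set.Iio (f x)).indicator 1 l := by
          intro l; simp [Set.indicator]
        simp only [h1]
        rw [lintegral_indicator measurableSet_Iio, Measure.restrict_restrict measurableSet_Iio]
        simp only [Pi.one_apply, lintegral_one, MeasurableSet.univ, Measure.restrict_apply,
          Set.univ_inter, Set.Iio_inter_Ioi, Real.volume_Ioo]
        rw [← ENNReal.ofReal_ofNat 2, ← ENNReal.ofReal_mul (by norm_num)]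
        unfold wyT
        split_ifs with h
        · apply ENNReal.ofReal_le_ofReal; linarith
        · simp
    _ = 2 * ∫⁻ l in Set.Ioi (τ/2), μ {x | l < f x} := by
        rw [lintegral_const_mul', lintegral_lintegral_swap]
        · congr 1
          apply lintegral_congr
          intro l
          rw [← lintegral_indicator_one (measurableSet_lt measurable_const hf)]
          rfl
        · exact (measurable_one.indicator hms).aemeasurable
        · simp
    _ ≤ 2 * ∫⁻ l in Set.Ioi (τ/2), ENNReal.ofReal (l ^ (-r)) := by
        gcongr 2 * ?_
        apply setLIntegral_mono' measurableSet_Ioi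
        intro l hl
        exact hF l (lt_trans (by positivity) hl)
    _ = _ := by
        rw [wy_J2 _ (by linarith) _ (by positivity), ← ENNReal.ofReal_ofNat 2,
          ← ENNReal.ofReal_mul (by norm_num)]
        congr 1
        rw [Real.div_rpow hτ.le (by norm_num), show -r + 1 = 1 - r by ring,
          Real.rpow_sub (by norm_num : (0:ℝ) < 2), Real.rpow_one]
        have : r - 1 ≠ 0 := by linarith
        have : 1 - r ≠ 0 := by linarith
        have : (2:ℝ) ^ r ≠ 0 := by positivity
        field_simp
        ring

lemma wy_M2 (μ : Measure E) [SFinite μ] (r c : ℝ) (hr : 1 < r) (hc : r < c) (f : E → ℝ)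
    (hf : Measurable f) (hf0 : ∀ x, 0 ≤ f x)
    (hF : ∀ l : ℝ, 0 < l → μ {x | l < f x} ≤ ENNReal.ofReal (l ^ (-r))) (τ : ℝ) (hτ : 0 < τ) :
    ∫⁻ x, ENNReal.ofReal (if f x ≤ τ then f x ^ c else 0) ∂μ ≤
      ENNReal.ofReal (c / (c - r) * τ ^ (c - r)) := by
  have hms : MeasurableSet {z : E × ℝ | z.2 < f z.1} :=
    measurableSet_lt measurable_snd (hf.comp measurable_fst)
  have hm : Measurable (fun z : E × ℝ => ENNReal.ofReal (z.2 ^ (c-1))) := by fun_prop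
  have hc0 : 0 < c := by linarith
  calc ∫⁻ x, ENNReal.ofReal (if f x ≤ τ then f x ^ c else 0) ∂μ
      ≤ ∫⁻ x, (ENNReal.ofReal c * ∫⁻ l in Set.Ioo 0 τ, {z : E × ℝ | z.2 < f z.1}.indicator
          (fun z => ENNReal.ofReal (z.2 ^ (c-1))) (x, l)) ∂μ := by
        apply lintegral_mono
        intro x
        have h1 : ∀ l, {z : E × ℝ | z.2 < f z.1}.indicator
            (fun z => ENNReal.ofReal (z.2 ^ (c-1))) (x, l)
            = (Set.Iio (f x)).indicator (fun l => ENNReal.ofReal (l ^ (c-1))) l := by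
          intro l; simp [Set.indicator]
        simp only [h1]
        rw [lintegral_indicator measurableSet_Iio, Measure.restrict_restrict measurableSet_Iio]
        split_ifs with h
        · have : Set.Iio (f x) ∩ Set.Ioo 0 τ = Set.Ioo 0 (f x) := by
            ext l; simp; constructor
            · rintro ⟨h1, h2, h3⟩; exact ⟨h2, h1⟩
            · rintro ⟨h1, h2⟩; exact ⟨h2, h1, by linarith⟩
          rw [this, wy_J1 _ (by linarith) _ (hf0 x), ← ENNReal.ofReal_mul hc0.le]
          apply ENNReal.ofReal_le_ofReal
          rw [sub_add_cancel, mul_div_cancel₀ _ hc0.ne']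
        · simp
    _ = ENNReal.ofReal c * ∫⁻ l in Set.Ioo 0 τ, ENNReal.ofReal (l ^ (c-1)) * μ {x | l < f x} := by
        rw [lintegral_const_mul', lintegral_lintegral_swap]
        · congr 1
          apply lintegral_congr
          intro l
          rw [← lintegral_indicator_const (measurableSet_lt measurable_const hf)]
          rfl
        · exact (hm.indicator hms).aemeasurable
        · simp
    _ ≤ ENNReal.ofReal c * ∫⁻ l in Set.Ioo 0 τ, ENNReal.ofReal (l ^ (c-1-r)) := by
        gcongr _ * ?_
        apply setLIntegral_mono' measurableSet_Ioo
        intro l hl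
        refine (mul_le_mul_right (hF l hl.1) _).trans ?_
        rw [← ENNReal.ofReal_mul (Real.rpow_nonneg hl.1.le _), ← Real.rpow_add hl.1]
        rfl
    _ = _ := by
        rw [wy_J1 _ (by linarith) _ hτ.le, ← ENNReal.ofReal_mul hc0.le]
        congr 1
        rw [show c - 1 - r + 1 = c - r by ring]
        ring

end tails

lemma wyT_nonneg (τ t : ℝ) (ht : 0 ≤ t) : 0 ≤ wyT τ t := by
  unfold wyT; split_ifs <;> simp [ht]

lemma wyT_comp {X : Type*} [MeasurableSpace X] {u v : X → ℝ} (hu : Measurable u)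
    (hv : Measurable v) : Measurable (fun x => wyT (u x) (v x)) :=
  wyT_meas.comp (hu.prodMk hv)

lemma wy_point (p P : ℝ) (hpP : P.HolderConjugate p) (l τ γ s t : ℝ) (hl : 0 < l)
    (hγ : 0 ≤ γ) (hs : 0 ≤ s) (ht : 0 ≤ t) :
    s * t ≤ l ^ (1 - P) * (if s ≤ τ then s ^ P else 0) + l * t ^ p + γ * wyT τ s
      + wyT τ s * wyT γ t := by
  have hA : 0 ≤ l * t ^ p := by positivity
  have hT1 := wyT_nonneg τ s hs
  have hT2 := wyT_nonneg γ t ht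
  by_cases h : s ≤ τ
  · rw [if_pos h]
    have hy := Real.young_inequality_of_nonneg (a := l ^ (-(1/p)) * s) (b := l ^ (1/p) * t)
      (by positivity) (by positivity) hpP
    have h1 : l ^ (-(1/p)) * s * (l ^ (1/p) * t) = s * t := by
      have : l ^ (-(1/p)) * l ^ (1/p) = 1 := by
        rw [← Real.rpow_add hl]; simp
      linear_combination (s * t) * this
    have hp := hpP.symm.pos
    have hP := hpP.pos
    have h2 : (l ^ (-(1/p)) * s) ^ P = l ^ (1 - P) * s ^ P := by
      rw [Real.mul_rpow (by positivity) hs, ← Real.rpow_mul hl.le]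
      congr 2
      have := hpP.inv_add_inv_eq_one
      field_simp at this ⊢
      linarith
    have h3 : (l ^ (1/p) * t) ^ p = l * t ^ p := by
      rw [Real.mul_rpow (by positivity) ht, ← Real.rpow_mul hl.le]
      rw [one_div_mul_cancel hp.ne', Real.rpow_one]
    rw [h1, h2, h3] at hy
    have h4 : l ^ (1 - P) * s ^ P / P ≤ l ^ (1 - P) * s ^ P :=
      div_le_self (by positivity) hpP.lt.le
    have h5 : l * t ^ p / p ≤ l * t ^ p := div_le_self (by positivity) hpP.symm.lt.le
    have h6 : 0 ≤ γ * wyT τ s := by positivity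
    have h7 : 0 ≤ wyT τ s * wyT γ t := by positivity
    linarith
  · have hs' : wyT τ s = s := by simp [wyT, not_le.mp h]
    rw [if_neg h, hs', mul_zero]
    by_cases h2 : γ < t
    · have : wyT γ t = t := by simp [wyT, h2]
      rw [this]
      have : 0 ≤ γ * s := by positivity
      linarith
    · have : wyT γ t = 0 := by simp [wyT, h2]
      rw [this]
      have : s * t ≤ γ * s := by nlinarith
      linarith

section conv
variable {d : ℕ}

lemma wy_sup (p q r P : ℝ) (hpP : P.HolderConjugate p)
    (hq1 : 1 < q) (hr1 : 1 < r) (hpqr : 1 + 1 / q = 1 / r + 1 / p)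
    (f g : (Fin d → ℝ) → ℝ) (hf : Measurable f) (hg : Measurable g)
    (hf0 : ∀ x, 0 ≤ f x) (hg0 : ∀ x, 0 ≤ g x)
    (hF : ∀ l : ℝ, 0 < l → volume {x | l < f x} ≤ ENNReal.ofReal (l ^ (-r)))
    (hG : ∫⁻ x, ENNReal.ofReal (g x ^ p) ≤ 1) (x : Fin d → ℝ) (l : ℝ) (hl : 0 < l) :
    ∫⁻ y, ENNReal.ofReal (f (x - y) * g y) ≤
      ENNReal.ofReal ((P / (P - r) + 1 + 2 ^ r / (r-1)) * l) +
      ∫⁻ y, ENNReal.ofReal (wyT (l ^ (q/r)) (f (x - y))) *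
        ENNReal.ofReal (wyT (l ^ (q/p)) (g y)) := by
  have hp := hpP.symm.pos
  have hP := hpP.pos
  have hq : 0 < q := by linarith
  have hr : 0 < r := by linarith
  have hconj := hpP.inv_add_inv_eq_one
  have hrP : r < P := by
    have h1 : 1 / P < 1 / r := by
      have : 0 < 1 / q := by positivity
      simp only [one_div] at *
      linarith
    exact (one_div_lt_one_div hP hr).1 h1
  set τ := l ^ (q/r) with hτ
  set γ := l ^ (q/p) with hγ
  have hτ0 : 0 < τ := by positivity
  have hγ0 : 0 < γ := by positivity
  have m1 : Measurable fun y => ENNReal.ofReal (if f (x - y) ≤ τ then f (x-y) ^ P else 0) := by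
    apply Measurable.ennreal_ofReal
    refine Measurable.ite (measurableSet_le (by fun_prop) measurable_const) (by fun_prop)
      measurable_const
  have m2 : Measurable fun y => ENNReal.ofReal (wyT τ (f (x - y))) :=
    (wyT_comp measurable_const (by fun_prop)).ennreal_ofReal
  have m3 : Measurable fun y => ENNReal.ofReal (g y ^ p) := by fun_prop
  have e1 : l ^ (1 - P) * τ ^ (P - r) = l := by
    rw [hτ, ← Real.rpow_mul hl.le, ← Real.rpow_add hl]
    conv_rhs => rw [← Real.rpow_one l]
    congr 1
    have h : 1 / q = 1 / r - 1 / P := by simp only [one_div] at *; linarith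
    have : q * (P - r) = r * P := by field_simp at h; linarith
    field_simp
    linarith
  have e2 : γ * τ ^ (1 - r) = l := by
    rw [hτ, hγ, ← Real.rpow_mul hl.le, ← Real.rpow_add hl]
    conv_rhs => rw [← Real.rpow_one l]
    congr 1
    field_simp at hpqr ⊢
    linarith
  calc ∫⁻ y, ENNReal.ofReal (f (x - y) * g y)
      ≤ ∫⁻ y, (ENNReal.ofReal (l ^ (1 - P)) *
            ENNReal.ofReal (if f (x - y) ≤ τ then f (x-y) ^ P else 0)
          + ENNReal.ofReal l * ENNReal.ofReal (g y ^ p)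
          + ENNReal.ofReal γ * ENNReal.ofReal (wyT τ (f (x - y)))
          + ENNReal.ofReal (wyT τ (f (x - y))) * ENNReal.ofReal (wyT γ (g y))) := by
        apply lintegral_mono
        intro y
        have h1 := wyT_nonneg τ _ (hf0 (x-y))
        have h2 := wyT_nonneg γ _ (hg0 y)
        have h3 := hf0 (x-y)
        have h4 := hg0 y
        have h5 : 0 ≤ (if f (x - y) ≤ τ then f (x-y) ^ P else 0) := by
          split_ifs
          · positivity
          · exact le_rfl
        dsimp only
        rw [← ENNReal.ofReal_mul (by positivity), ← ENNReal.ofReal_mul hl.le,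
          ← ENNReal.ofReal_mul hγ0.le, ← ENNReal.ofReal_mul h1,
          ← ENNReal.ofReal_add (by positivity) (by positivity),
          ← ENNReal.ofReal_add (by positivity) (by positivity),
          ← ENNReal.ofReal_add (by positivity) (by positivity)]
        exact ENNReal.ofReal_le_ofReal (wy_point p P hpP l τ γ _ _ hl hγ0.le h3 h4)
    _ = ENNReal.ofReal (l ^ (1 - P)) *
            (∫⁻ y, ENNReal.ofReal (if f (x - y) ≤ τ then f (x-y) ^ P else 0))
          + ENNReal.ofReal l * (∫⁻ y, ENNReal.ofReal (g y ^ p))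
          + ENNReal.ofReal γ * (∫⁻ y, ENNReal.ofReal (wyT τ (f (x - y))))
          + ∫⁻ y, ENNReal.ofReal (wyT τ (f (x - y))) * ENNReal.ofReal (wyT γ (g y)) := by
        rw [lintegral_add_left (by fun_prop), lintegral_add_left (by fun_prop),
          lintegral_add_left (by fun_prop), lintegral_const_mul _ m1, lintegral_const_mul _ m2,
          lintegral_const_mul _ m3]
    _ ≤ _ := by
        gcongr ?_ + _
        rw [lintegral_sub_left_eq_self
          (fun y => ENNReal.ofReal (if f y ≤ τ then f y ^ P else 0)) x,
          lintegral_sub_left_eq_self (fun y => ENNReal.ofReal (wyT τ (f y))) x]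
        have hPr : 0 < P - r := by linarith
        have hr1' : 0 < r - 1 := by linarith
        refine (add_le_add (add_le_add
          (mul_le_mul_right (wy_M2 volume r P hr1 hrP f hf hf0 hF τ hτ0) _)
          (mul_le_mul_right hG _))
          (mul_le_mul_right (wy_M1 volume r hr1 f hf hF τ hτ0) _)).trans ?_
        rw [mul_one, ← ENNReal.ofReal_mul (by positivity), ← ENNReal.ofReal_mul (by positivity),
          ← ENNReal.ofReal_add (by positivity) (by positivity),
          ← ENNReal.ofReal_add (by positivity) (by positivity)]
        apply ENNReal.ofReal_le_ofReal
        apply le_of_eq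
        linear_combination (P / (P - r)) * e1 + (2 ^ r / (r-1)) * e2

lemma wy_lower (q K : ℝ) (hq1 : 1 < q) (hK : 0 < K) (T : ℝ≥0∞) (B : ℝ → ℝ≥0∞)
    (h : ∀ l : ℝ, 0 < l → T ≤ ENNReal.ofReal (K * l) + B l) :
    T ^ q ≤ ENNReal.ofReal (2 * (q-1) * (2 * K) ^ (q-1)) *
      ∫⁻ l in Set.Ioi (0:ℝ), ENNReal.ofReal (l ^ (q-2)) * B l := by
  have hq : 0 < q := by linarith
  have hq' : 0 < q - 1 := by linarith
  rw [← ENNReal.le_rpow_inv_iff hq]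
  apply ENNReal.le_of_forall_nnreal_lt
  intro R hR
  rw [ENNReal.le_rpow_inv_iff hq]
  have hR0 : 0 ≤ (R : ℝ) := R.2
  rw [← ENNReal.ofReal_coe_nnreal] at hR ⊢
  generalize (R : ℝ) = R at hR hR0 ⊢
  have hB : ∀ l ∈ Set.Ioo 0 (R / (2*K)), ENNReal.ofReal (R/2) ≤ B l := by
    intro l hl
    have h1 : ENNReal.ofReal (R/2) + ENNReal.ofReal (R/2) ≤ ENNReal.ofReal (R/2) + B l := by
      rw [← ENNReal.ofReal_add (by positivity) (by positivity), add_halves]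
      refine hR.le.trans ((h l hl.1).trans ?_)
      gcongr
      have := (lt_div_iff₀ (by positivity)).1 hl.2
      linarith
    exact (ENNReal.add_le_add_iff_left ENNReal.ofReal_ne_top).1 h1
  calc ENNReal.ofReal R ^ q = ENNReal.ofReal (2 * (q-1) * (2 * K) ^ (q-1)) *
        ∫⁻ l in Set.Ioo 0 (R / (2*K)), ENNReal.ofReal (l ^ (q-2)) * ENNReal.ofReal (R/2) := by
        rw [lintegral_mul_const _ (by fun_prop), wy_J1 _ (by linarith) _ (by positivity),
          ← ENNReal.ofReal_mul (by rw [show q - 2 + 1 = q - 1 by ring]; positivity),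
          ← ENNReal.ofReal_mul (by positivity),
          ENNReal.ofReal_rpow_of_nonneg hR0 hq.le]
        congr 1
        rw [show q - 2 + 1 = q - 1 by ring, Real.div_rpow hR0 (by positivity)]
        have : R ^ q = R ^ (q-1) * R := by
          rcases hR0.eq_or_lt with h0 | h0
          · rw [← h0, Real.zero_rpow hq.ne']; simp
          · rw [← Real.rpow_add_one h0.ne']; simp
        rw [this]
        have : (2 * K) ^ (q-1) ≠ 0 := by positivity
        field_simp
    _ ≤ ENNReal.ofReal (2 * (q-1) * (2 * K) ^ (q-1)) *
        ∫⁻ l in Set.Ioo 0 (R / (2*K)), ENNReal.ofReal (l ^ (q-2)) * B l := by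
        gcongr _ * ?_
        apply setLIntegral_mono' measurableSet_Ioo
        intro l hl
        gcongr
        exact hB l hl
    _ ≤ _ := by
        gcongr _ * ?_
        exact lintegral_mono_set Set.Ioo_subset_Ioi_self

lemma wy_upper (p q r : ℝ) (hp1 : 1 < p)
    (hq1 : 1 < q) (hr1 : 1 < r) (hpqr : 1 + 1 / q = 1 / r + 1 / p)
    (f g : (Fin d → ℝ) → ℝ) (hf : Measurable f) (hg : Measurable g)
    (hg0 : ∀ x, 0 ≤ g x)
    (hF : ∀ l : ℝ, 0 < l → volume {x | l < f x} ≤ ENNReal.ofReal (l ^ (-r)))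
    (hG : ∫⁻ x, ENNReal.ofReal (g x ^ p) ≤ 1) :
    ∫⁻ x, ∫⁻ l in Set.Ioi (0:ℝ), ENNReal.ofReal (l ^ (q-2)) *
      ∫⁻ y, ENNReal.ofReal (wyT (l ^ (q/r)) (f (x - y))) *
        ENNReal.ofReal (wyT (l ^ (q/p)) (g y)) ≤
    ENNReal.ofReal (2 ^ r / (r-1) / (q * (1 - 1/p))) := by
  have hp : 0 < p := by linarith
  have hq : 0 < q := by linarith
  have hr : 0 < r := by linarith
  have hr1' : 0 < r - 1 := by linarith
  have hpi : 0 < 1 - 1 / p := by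
    have : 1 / p < 1 := by rw [div_lt_one hp]; exact hp1
    linarith
  have mA : Measurable fun z : (Fin d → ℝ) × ℝ × (Fin d → ℝ) =>
      ENNReal.ofReal (wyT (z.2.1 ^ (q/r)) (f (z.1 - z.2.2))) :=
    (wyT_comp (by fun_prop) (by fun_prop)).ennreal_ofReal
  have mB : Measurable fun z : ℝ × (Fin d → ℝ) =>
      ENNReal.ofReal (wyT (z.1 ^ (q/p)) (g z.2)) :=
    (wyT_comp (by fun_prop) (by fun_prop)).ennreal_ofReal
  have mAB : Measurable fun z : ((Fin d → ℝ) × ℝ) × (Fin d → ℝ) =>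
      ENNReal.ofReal (wyT (z.1.2 ^ (q/r)) (f (z.1.1 - z.2))) *
        ENNReal.ofReal (wyT (z.1.2 ^ (q/p)) (g z.2)) := by
    refine Measurable.fun_mul ?_ ?_
    · exact mA.comp (f := fun z : ((Fin d → ℝ) × ℝ) × (Fin d → ℝ) => (z.1.1, z.1.2, z.2))
        (by fun_prop)
    · exact mB.comp (f := fun z : ((Fin d → ℝ) × ℝ) × (Fin d → ℝ) => (z.1.2, z.2))
        (by fun_prop)
  rw [lintegral_lintegral_swap]
  swap
  · apply Measurable.aemeasurable
    apply Measurable.mul (by fun_prop)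
    exact mAB.lintegral_prod_right'
  calc ∫⁻ l in Set.Ioi (0:ℝ), ∫⁻ x, ENNReal.ofReal (l ^ (q-2)) *
      ∫⁻ y, ENNReal.ofReal (wyT (l ^ (q/r)) (f (x - y))) *
        ENNReal.ofReal (wyT (l ^ (q/p)) (g y))
      ≤ ∫⁻ l in Set.Ioi (0:ℝ), ∫⁻ y, ENNReal.ofReal (2 ^ r / (r-1)) *
          (ENNReal.ofReal (l ^ (q * (1 - 1/p) - 1)) *
          ENNReal.ofReal (wyT (l ^ (q/p)) (g y))) := by
        apply setLIntegral_mono' measurableSet_Ioi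
        intro l hl
        have hl : 0 < l := hl
        have mABl : Measurable fun z : (Fin d → ℝ) × (Fin d → ℝ) =>
            ENNReal.ofReal (wyT (l ^ (q/r)) (f (z.1 - z.2))) *
            ENNReal.ofReal (wyT (l ^ (q/p)) (g z.2)) :=
          mAB.comp (f := fun z : (Fin d → ℝ) × (Fin d → ℝ) => ((z.1, l), z.2)) (by fun_prop)
        rw [lintegral_const_mul' _ _ ENNReal.ofReal_ne_top, lintegral_lintegral_swap
          mABl.aemeasurable, ← lintegral_const_mul' _ _ ENNReal.ofReal_ne_top]
        apply lintegral_mono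
        intro y
        dsimp only
        rw [lintegral_mul_const' _ _ ENNReal.ofReal_ne_top,
          lintegral_sub_right_eq_self (fun x => ENNReal.ofReal (wyT (l ^ (q/r)) (f x))) y]
        rw [← mul_assoc, ← mul_assoc]
        gcongr ?_ * _
        refine (mul_le_mul_right (wy_M1 volume r hr1 f hf hF (l ^ (q/r)) (by positivity)) _).trans ?_
        rw [← ENNReal.ofReal_mul (by positivity), ← ENNReal.ofReal_mul (by positivity)]
        apply ENNReal.ofReal_le_ofReal
        apply le_of_eq
        rw [← Real.rpow_mul hl.le, mul_left_comm, ← Real.rpow_add hl]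
        congr 2
        field_simp at hpqr ⊢
        linarith
    _ = ∫⁻ y, ∫⁻ l in Set.Ioi (0:ℝ), ENNReal.ofReal (2 ^ r / (r-1)) *
          (ENNReal.ofReal (l ^ (q * (1 - 1/p) - 1)) *
          ENNReal.ofReal (wyT (l ^ (q/p)) (g y))) := by
        rw [lintegral_lintegral_swap]
        apply Measurable.aemeasurable
        exact Measurable.fun_mul measurable_const (Measurable.fun_mul (by fun_prop) mB)
    _ ≤ ∫⁻ y, ENNReal.ofReal (2 ^ r / (r-1) / (q * (1 - 1/p))) * ENNReal.ofReal (g y ^ p) := by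
        apply lintegral_mono
        intro y
        dsimp only
        have hgy := hg0 y
        rw [lintegral_const_mul' _ _ ENNReal.ofReal_ne_top]
        have h1 : ∀ l ∈ Set.Ioi (0:ℝ), ENNReal.ofReal (l ^ (q * (1 - 1/p) - 1)) *
            ENNReal.ofReal (wyT (l ^ (q/p)) (g y)) = (Set.Iio (g y ^ (p/q))).indicator
            (fun l => ENNReal.ofReal (l ^ (q * (1 - 1/p) - 1)) * ENNReal.ofReal (g y)) l := by
          intro l hl
          have hl : 0 < l := hl
          have hiff : l ^ (q/p) < g y ↔ l < g y ^ (p/q) := by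
            rw [show p / q = (q/p)⁻¹ by rw [inv_div],
              Real.lt_rpow_inv_iff_of_pos hl.le hgy (by positivity)]
          simp only [wyT, Set.indicator, Set.mem_Iio, hiff]
          split_ifs <;> simp
        rw [setLIntegral_congr_fun measurableSet_Ioi h1, lintegral_indicator measurableSet_Iio,
          Measure.restrict_restrict measurableSet_Iio, Set.Iio_inter_Ioi,
          lintegral_mul_const' _ _ ENNReal.ofReal_ne_top,
          wy_J1 _ (by have : 0 < q * (1 - 1/p) := by positivity
                      linarith) _ (by positivity), sub_add_cancel,
          ← ENNReal.ofReal_mul (by positivity), ← ENNReal.ofReal_mul (by positivity),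
          ← ENNReal.ofReal_mul (by positivity)]
        apply ENNReal.ofReal_le_ofReal
        apply le_of_eq
        have : g y ^ p = (g y ^ (p/q)) ^ (q * (1 - 1/p)) * g y := by
          rw [← Real.rpow_mul hgy]
          have e : p / q * (q * (1 - 1/p)) = p - 1 := by field_simp
          rw [e]
          rcases hgy.eq_or_lt with h0 | h0
          · rw [← h0, Real.zero_rpow hp.ne']; simp
          · rw [← Real.rpow_add_one h0.ne']; simp
        rw [this]
        ring
    _ ≤ _ := by
        rw [lintegral_const_mul' _ _ ENNReal.ofReal_ne_top]
        exact (mul_le_mul_right hG _).trans (by rw [mul_one])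

lemma wy_key (p q r : ℝ) (hp1 : 1 < p)
    (hq1 : 1 < q) (hr1 : 1 < r) (hpqr : 1 + 1 / q = 1 / r + 1 / p) :
    ∃ C : ℝ, 0 < C ∧ ∀ f g : (Fin d → ℝ) → ℝ, Measurable f → Measurable g →
    (∀ x, 0 ≤ f x) → (∀ x, 0 ≤ g x) →
    (∀ l : ℝ, 0 < l → volume {x | l < f x} ≤ ENNReal.ofReal (l ^ (-r))) →
    (∫⁻ x, ENNReal.ofReal (g x ^ p) ≤ 1) →
    (∫⁻ x, (∫⁻ y, ENNReal.ofReal (f (x - y) * g y)) ^ q) ^ (1 / q) ≤ ENNReal.ofReal C := by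
  have hp : 0 < p := by linarith
  have hq : 0 < q := by linarith
  have hr : 0 < r := by linarith
  have hpP : (p / (p-1)).HolderConjugate p := (Real.HolderConjugate.conjExponent hp1).symm
  set P := p / (p-1) with hPdef
  have hP := hpP.pos
  have hconj := hpP.inv_add_inv_eq_one
  have hrP : r < P := by
    have h1 : 1 / P < 1 / r := by
      have : 0 < 1 / q := by positivity
      simp only [one_div] at *
      linarith
    exact (one_div_lt_one_div hP hr).1 h1
  have hPr : 0 < P - r := by linarith
  have hr1' : 0 < r - 1 := by linarith
  have hq1' : 0 < q - 1 := by linarith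
  have hpi : 0 < 1 - 1 / p := by
    have : 1 / p < 1 := by rw [div_lt_one hp]; exact hp1
    linarith
  have hK : 0 < P / (P - r) + 1 + 2 ^ r / (r-1) := by positivity
  set K := P / (P - r) + 1 + 2 ^ r / (r-1) with hKdef
  refine ⟨(2 * (q-1) * (2 * K) ^ (q-1) * (2 ^ r / (r-1) / (q * (1 - 1/p)))) ^ (1/q),
    by positivity, ?_⟩
  intro f g hf hg hf0 hg0 hF hG
  rw [← ENNReal.ofReal_rpow_of_nonneg (by positivity) (by positivity)]
  apply ENNReal.rpow_le_rpow _ (by positivity)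
  rw [ENNReal.ofReal_mul (by positivity)]
  refine le_trans ?_ (mul_le_mul_right
    (wy_upper p q r hp1 hq1 hr1 hpqr f g hf hg hg0 hF hG) _)
  rw [← lintegral_const_mul' _ _ ENNReal.ofReal_ne_top]
  apply lintegral_mono
  intro x
  exact wy_lower q K hq1 hK _ _
    (fun l hl => wy_sup p q r P hpP hq1 hr1 hpqr f g hf hg hf0 hg0 hF hG x l hl)

end conv

lemma wy_scaled {d : ℕ} (p q r C : ℝ) (hp1 : 1 < p) (hq1 : 1 < q) (hr1 : 1 < r) (hC : 0 < C)
    (hkey : ∀ f g : (Fin d → ℝ) → ℝ, Measurable f → Measurable g →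
      (∀ x, 0 ≤ f x) → (∀ x, 0 ≤ g x) →
      (∀ l : ℝ, 0 < l → volume {x | l < f x} ≤ ENNReal.ofReal (l ^ (-r))) →
      (∫⁻ x, ENNReal.ofReal (g x ^ p) ≤ 1) →
      (∫⁻ x, (∫⁻ y, ENNReal.ofReal (f (x - y) * g y)) ^ q) ^ (1 / q) ≤ ENNReal.ofReal C)
    (f g : (Fin d → ℝ) → ℝ) (hf : Measurable f) (hg : Measurable g) (A B : ℝ)
    (hA : 0 < A) (hB : 0 < B) (hfA : weakLnorm f r ≤ ENNReal.ofReal A)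
    (hgB : Lnorm g p ≤ ENNReal.ofReal B) :
    (∫⁻ x, (∫⁻ y, ENNReal.ofReal (|f (x - y)| * |g y|)) ^ q) ^ (1 / q) ≤
      ENNReal.ofReal C * (ENNReal.ofReal A * ENNReal.ofReal B) := by
  have hp : 0 < p := by linarith
  have hq : 0 < q := by linarith
  have hr : 0 < r := by linarith
  have h := hkey (fun x => |f x| / A) (fun x => |g x| / B)
    (by exact (measurable_norm.comp hf).div_const A)
    (by exact (measurable_norm.comp hg).div_const B)
    (fun x => by positivity) (fun x => by positivity) ?_ ?_
  · have hT : ∀ x, ∫⁻ y, ENNReal.ofReal (|f (x - y)| * |g y|) =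
        (ENNReal.ofReal A * ENNReal.ofReal B) *
          ∫⁻ y, ENNReal.ofReal (|f (x - y)| / A * (|g y| / B)) := by
      intro x
      rw [← ENNReal.ofReal_mul hA.le, ← lintegral_const_mul' _ _ ENNReal.ofReal_ne_top]
      apply lintegral_congr
      intro y
      rw [← ENNReal.ofReal_mul (by positivity)]
      congr 1
      field_simp
    have hne : ENNReal.ofReal A * ENNReal.ofReal B ≠ ⊤ :=
      ENNReal.mul_ne_top ENNReal.ofReal_ne_top ENNReal.ofReal_ne_top
    generalize ENNReal.ofReal A * ENNReal.ofReal B = D at hT hne ⊢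
    simp only [hT, ENNReal.mul_rpow_of_nonneg _ _ hq.le]
    rw [lintegral_const_mul' _ _ (ENNReal.rpow_ne_top_of_nonneg hq.le hne),
      ENNReal.mul_rpow_of_nonneg _ _ (by positivity), ← ENNReal.rpow_mul,
      mul_one_div_cancel hq.ne', ENNReal.rpow_one, mul_comm]
    gcongr
  · intro l hl
    have hset : {x | l < |f x| / A} = {x | A * l < |f x|} := by
      ext x; simp only [Set.mem_ofPred_eq]; rw [lt_div_iff₀ hA, mul_comm]
    rw [hset]
    have h1 : ENNReal.ofReal (A * l) * (volume {x | A * l < |f x|}) ^ (1/r) ≤ ENNReal.ofReal A :=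
      le_trans (le_iSup₂ (f := fun (l : ℝ) (_ : 0 < l) => ENNReal.ofReal l *
        (volume {x : Fin d → ℝ | l < |f x|}) ^ (1 / r)) (A * l) (by positivity)) hfA
    have h2 : (volume {x | A * l < |f x|}) ^ (1/r) ≤ ENNReal.ofReal (l⁻¹) := by
      have h3 : ENNReal.ofReal A = ENNReal.ofReal (A * l) * ENNReal.ofReal (l⁻¹) := by
        rw [← ENNReal.ofReal_mul (by positivity)]
        congr 1; field_simp
      rw [h3] at h1
      refine (ENNReal.mul_le_mul_iff_right ?_ ENNReal.ofReal_ne_top).1 h1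
      simp; positivity
    rw [one_div, ENNReal.rpow_inv_le_iff hr,
      ENNReal.ofReal_rpow_of_nonneg (by positivity) hr.le] at h2
    rwa [Real.rpow_neg hl.le, ← Real.inv_rpow hl.le]
  · unfold Lnorm at hgB
    rw [one_div, ENNReal.rpow_inv_le_iff hp, ENNReal.ofReal_rpow_of_nonneg hB.le hp.le] at hgB
    have : ∀ x, ENNReal.ofReal ((|g x| / B) ^ p) =
        ENNReal.ofReal ((B ^ p)⁻¹) * ENNReal.ofReal (|g x| ^ p) := by
      intro x
      rw [← ENNReal.ofReal_mul (by positivity), Real.div_rpow (by positivity) hB.le]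
      congr 1; ring
    simp only [this]
    rw [lintegral_const_mul' _ _ ENNReal.ofReal_ne_top]
    refine (mul_le_mul_right hgB _).trans ?_
    rw [← ENNReal.ofReal_mul (by positivity), inv_mul_cancel₀ (by positivity)]
    simp

/-- Weak Young inequality: for 1 < p, q, r < ∞ with 1 + 1/q = 1/r + 1/p there is a
constant C = C(p,q,r,d) such that for f ∈ L^{r,∞}(ℝ^d) and g ∈ L^p(ℝ^d) the convolution
f⋆g is a.e. defined and ‖f⋆g‖_{L^q} ≤ C ‖f‖_{L^{r,∞}} ‖g‖_{L^p}. -/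
theorem weak_young_inequality (d : ℕ) (hd : 1 ≤ d) (p q r : ℝ)
    (hp1 : 1 < p) (hq1 : 1 < q) (hr1 : 1 < r) (hpqr : 1 + 1 / q = 1 / r + 1 / p) :
    ∃ C : ℝ, 0 < C ∧
      ∀ f g : (Fin d → ℝ) → ℝ, Measurable f → Measurable g →
        weakLnorm f r < ⊤ → Lnorm g p < ⊤ →
        (∀ᵐ x : Fin d → ℝ, Integrable (fun y => f (x - y) * g y)) ∧
          Lnorm (fun x => ∫ y : Fin d → ℝ, f (x - y) * g y) q
            ≤ ENNReal.ofReal C * weakLnorm f r * Lnorm g p := by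
  obtain ⟨C, hC, hkey⟩ := wy_key (d := d) p q r hp1 hq1 hr1 hpqr
  refine ⟨C, hC, ?_⟩
  intro f g hf hg hfA hgB
  have hq : 0 < q := by linarith
  have hC0 : ENNReal.ofReal C ≠ 0 := by simpa using hC
  have hN : (∫⁻ x, (∫⁻ y, ENNReal.ofReal (|f (x - y)| * |g y|)) ^ q) ^ (1 / q) ≤
      ENNReal.ofReal C * weakLnorm f r * Lnorm g p := by
    rw [mul_assoc, mul_comm (ENNReal.ofReal C),
      ← ENNReal.div_le_iff_le_mul (Or.inl hC0) (Or.inl ENNReal.ofReal_ne_top)]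
    apply ENNReal.le_mul_of_forall_lt (Or.inr hgB.ne) (Or.inl hfA.ne)
    intro A hA B hB
    have hA0 : A ≠ 0 := (zero_le.trans_lt hA).ne'
    have hB0 : B ≠ 0 := (zero_le.trans_lt hB).ne'
    by_cases hAt : A = ⊤
    · rw [hAt, ENNReal.top_mul hB0]; exact le_top
    by_cases hBt : B = ⊤
    · rw [hBt, ENNReal.mul_top hA0]; exact le_top
    rw [ENNReal.div_le_iff_le_mul (Or.inl hC0) (Or.inl ENNReal.ofReal_ne_top), mul_comm]
    have := wy_scaled p q r C hp1 hq1 hr1 hC hkey f g hf hg A.toReal B.toReal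
      (ENNReal.toReal_pos hA0 hAt) (ENNReal.toReal_pos hB0 hBt)
      (by rw [ENNReal.ofReal_toReal hAt]; exact hA.le)
      (by rw [ENNReal.ofReal_toReal hBt]; exact hB.le)
    rwa [ENNReal.ofReal_toReal hAt, ENNReal.ofReal_toReal hBt] at this
  have hnorm : ∀ x y, ENNReal.ofReal (|f (x - y)| * |g y|) = ‖f (x - y) * g y‖ₑ := by
    intro x y
    rw [← abs_mul, ← Real.enorm_eq_ofReal_abs]
  have hfin : (∫⁻ x, (∫⁻ y, ENNReal.ofReal (|f (x - y)| * |g y|)) ^ q) ≠ ⊤ := by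
    intro htop
    rw [htop, ENNReal.top_rpow_of_pos (by positivity)] at hN
    exact (ENNReal.mul_lt_top (ENNReal.mul_lt_top ENNReal.ofReal_lt_top hfA) hgB).not_ge hN
  constructor
  · have hm : Measurable fun x => (∫⁻ y, ENNReal.ofReal (|f (x - y)| * |g y|)) ^ q := by
      apply Measurable.pow_const
      apply Measurable.lintegral_prod_right'
        (f := fun z : (Fin d → ℝ) × (Fin d → ℝ) => ENNReal.ofReal (|f (z.1 - z.2)| * |g z.2|))
      fun_prop
    filter_upwards [ae_lt_top hm hfin] with x hx
    refine ⟨(by fun_prop : Measurable fun y => f (x - y) * g y).aestronglyMeasurable, ?_⟩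
    unfold HasFiniteIntegral
    simp only [← hnorm]
    exact (ENNReal.rpow_lt_top_iff_of_pos hq).1 hx
  · refine le_trans ?_ hN
    unfold Lnorm
    gcongr with x
    rw [← ENNReal.ofReal_rpow_of_nonneg (abs_nonneg _) hq.le, ← Real.enorm_eq_ofReal_abs]
    gcongr
    refine (enorm_integral_le_lintegral_enorm _).trans ?_
    simp only [hnorm, le_refl]
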